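/- arXiv:2402.15167 — 2 statements merged into one kernel-verified Lean document; each statement's English description precedes it below -/
import Mathlib

section
/- Fix integers N ≥ 2, d ≥ 1 and let K be any integer with K ≥ dN + 1. The set Θ = {(y_1, …, y_K) ∈ (ℝ^d)^K : there exists X ∉ Ω with f̃_{y_k}(X) = 0 for every k ∈ {1, …, K}} has Lebesgue measure zero in ℝ^{dK}. -/
/-!
The proof is a dimension count. If `ftilde N d (Y k) X = 0` for all `k`, then each `Y k` is
orthogonal to some difference `X i - X j`, `i ≠ j`, which is nonzero because `X` is not in the
intrinsic zero set. Choose for every `k` such a pair `p k` and a coordinate `L k` at which the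
difference does not vanish; there are finitely many choices `(p, L)`. For a fixed choice the
coordinate `Y k (L k)` is a rational function of `X` and the other coordinates of `Y k`, so the
bad `Y` are parametrized by `d * N + (d - 1) * K < d * K` real parameters.

To stay within Mathlib's change of variables, the parameters are packed into the space
`Fin K → Fin d → ℝ` itself: the `d * N` coordinates of `X` are stored in the freed slots
`(k, L k)`. Since `K > d * N`, one slot remains unused, so the parametrization `param` is constant
in that direction and its derivative is singular wherever the denominators are nonzero
(`det_eq_zero_of_constant_dir`). The
image of a map with singular derivative has measure zero.
-/

/-- `f̃_y(X) = ∏_{i<j} yᵀ(X_i − X_j)`. -/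
noncomputable def ftilde (N d : ℕ) (y : Fin d → ℝ) (X : Fin N → Fin d → ℝ) : ℝ :=
  ∏ i : Fin N, ∏ j ∈ Finset.Ioi i, (∑ l : Fin d, y l * (X i l - X j l))

/-- The intrinsic zero set `Ω`. -/
def intrinsicZero (N d : ℕ) : Set (Fin N → Fin d → ℝ) :=
  {X | ∃ i j : Fin N, i ≠ j ∧ X i = X j}

open MeasureTheory

/-- The configuration stored in the slots `(e (i, l), L (e (i, l)))` of `Z`. -/
def slotConfig {N d K : ℕ} (e : Fin N × Fin d → Fin K) (L : Fin K → Fin d)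
    (Z : Fin K → Fin d → ℝ) : Fin N → Fin d → ℝ :=
  fun i l => Z (e (i, l)) (L (e (i, l)))

/-- The parametrization of the bad tuples: the entry `(k, L k)` is replaced by the value that makes
the `k`-th vector orthogonal to the difference of the points `p k` of the stored configuration. -/
noncomputable def param {N d K : ℕ} (e : Fin N × Fin d → Fin K) (p : Fin K → Fin N × Fin N)
    (L : Fin K → Fin d) (Z : Fin K → Fin d → ℝ) : Fin K → Fin d → ℝ :=
  fun k l => if l = L k then
      -(∑ m ∈ Finset.univ.erase (L k),
          Z k m * (slotConfig e L Z (p k).1 m - slotConfig e L Z (p k).2 m)) /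
        (slotConfig e L Z (p k).1 (L k) - slotConfig e L Z (p k).2 (L k))
    else Z k l

/-- A derivative is singular at a point where the function is constant along some direction. -/
lemma det_eq_zero_of_constant_dir {E : Type*} [NormedAddCommGroup E] [NormedSpace ℝ E]
    [FiniteDimensional ℝ E]
    {f : E → E} {f' : E →L[ℝ] E} {x w : E} (hf : HasFDerivAt f f' x) (hw : w ≠ 0)
    (hc : ∀ t : ℝ, f (x + t • w) = f x) : f'.det = 0 := by
  have h1 : HasLineDerivAt ℝ f (f' w) x w := hf.hasLineDerivAt w
  have h2 : f' w = 0 := by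
    unfold HasLineDerivAt at h1
    simp only [hc] at h1
    exact h1.unique (hasDerivAt_const _ _)
  by_contra hdet
  have hinj := (LinearMap.equivOfDetNeZero (f' : E →ₗ[ℝ] E) hdet).injective
  exact hw (hinj (by simpa using h2))

lemma differentiableAt_param {N d K : ℕ} (e : Fin N × Fin d → Fin K)
    (p : Fin K → Fin N × Fin N) (L : Fin K → Fin d) (Z : Fin K → Fin d → ℝ)
    (hZ : ∀ k, slotConfig e L Z (p k).1 (L k) - slotConfig e L Z (p k).2 (L k) ≠ 0) :
    DifferentiableAt ℝ (param e p L) Z := by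
  have hco : ∀ k l, DifferentiableAt ℝ (fun Z : Fin K → Fin d → ℝ => Z k l) Z := by
    intro k l
    fun_prop
  rw [differentiableAt_pi]
  intro k
  rw [differentiableAt_pi]
  intro l
  by_cases h : l = L k
  · simp only [param, h, if_true]
    simp only [div_eq_mul_inv]
    refine DifferentiableAt.fun_mul ?_ (DifferentiableAt.fun_inv ?_ (hZ k))
    · refine DifferentiableAt.fun_neg (DifferentiableAt.fun_sum fun m _ => ?_)
      exact (hco _ _).fun_mul ((hco _ _).fun_sub (hco _ _))
    · exact (hco _ _).fun_sub (hco _ _)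
  · simp only [param, h, if_false]
    exact hco _ _

/-- The image of the parametrization is a null set as soon as one slot `k₀` is unused. -/
lemma volume_image_param {N d K : ℕ} (e : Fin N × Fin d → Fin K)
    (p : Fin K → Fin N × Fin N) (L : Fin K → Fin d) (k₀ : Fin K) (hk₀ : ∀ a, e a ≠ k₀) :
    volume (param e p L '' {Z | ∀ k, slotConfig e L Z (p k).1 (L k)
      - slotConfig e L Z (p k).2 (L k) ≠ 0}) = 0 := by
  refine addHaar_image_eq_zero_of_det_fderivWithin_eq_zero volume
    (f' := fun Z => fderiv ℝ (param e p L) Z) ?_ ?_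
  · intro Z hZ
    exact (differentiableAt_param e p L Z hZ).hasFDerivAt.hasFDerivWithinAt
  · intro Z hZ
    refine det_eq_zero_of_constant_dir (differentiableAt_param e p L Z hZ).hasFDerivAt
      (w := Pi.single k₀ (Pi.single (L k₀) 1)) ?_ ?_
    · simp
    · intro t
      set w : Fin K → Fin d → ℝ := Pi.single k₀ (Pi.single (L k₀) 1) with hw
      have hw0 : ∀ k l, (k ≠ k₀ ∨ l ≠ L k) → (Z + t • w) k l = Z k l := by
        intro k l h
        by_cases hk : k = k₀
        · subst hk
          have hl : l ≠ L k := by tauto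
          simp [hw, hl]
        · simp [hw, hk]
      have hX : slotConfig e L (Z + t • w) = slotConfig e L Z := by
        funext i l
        exact hw0 _ _ (Or.inl (hk₀ _))
      funext k l
      simp only [param, hX]
      split_ifs with h
      · congr 2
        refine Finset.sum_congr rfl fun m hm => ?_
        rw [hw0 k m (Or.inr (Finset.ne_of_mem_erase hm))]
      · exact hw0 k l (Or.inr h)

/-- A tuple orthogonal to nonzero differences of a configuration lies in the image of the
parametrization. -/
lemma mem_image_param {N d K : ℕ} {e : Fin N × Fin d → Fin K} (he : Function.Injective e)
    {p : Fin K → Fin N × Fin N} {L : Fin K → Fin d} {X : Fin N → Fin d → ℝ}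
    {Y : Fin K → Fin d → ℝ} (hL : ∀ k, X (p k).1 (L k) - X (p k).2 (L k) ≠ 0)
    (hY : ∀ k, ∑ l, Y k l * (X (p k).1 l - X (p k).2 l) = 0) :
    Y ∈ param e p L '' {Z | ∀ k, slotConfig e L Z (p k).1 (L k)
      - slotConfig e L Z (p k).2 (L k) ≠ 0} := by
  let Z : Fin K → Fin d → ℝ := fun k l =>
    if l = L k then Function.extend e (fun a => X a.1 a.2) 0 k else Y k l
  have hX : slotConfig e L Z = X := by
    funext i l
    simp [slotConfig, Z, he.extend_apply]
  refine ⟨Z, ?_, ?_⟩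
  · simpa only [Set.mem_ofPred_eq, hX] using hL
  · funext k l
    simp only [param, hX]
    split_ifs with h
    · have hsum : ∑ m ∈ Finset.univ.erase (L k), Z k m * (X (p k).1 m - X (p k).2 m)
          = ∑ m ∈ Finset.univ.erase (L k), Y k m * (X (p k).1 m - X (p k).2 m) := by
        refine Finset.sum_congr rfl fun m hm => ?_
        simp [Z, Finset.ne_of_mem_erase hm]
      have h2 := hY k
      rw [← Finset.add_sum_erase _ _ (Finset.mem_univ (L k))] at h2
      rw [hsum, div_eq_iff (hL k), h]
      linarith
    · simp [Z, h]

theorem stmt_1 (N d K : ℕ) (hN : 2 ≤ N) (hd : 1 ≤ d) (hK : d * N + 1 ≤ K) :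
    MeasureTheory.volume
      {Y : Fin K → Fin d → ℝ |
        ∃ X : Fin N → Fin d → ℝ, X ∉ intrinsicZero N d ∧
          ∀ k : Fin K, ftilde N d (Y k) X = 0} = 0 := by
  have hNK : N * d ≤ K := by rw [mul_comm]; omega
  let e : Fin N × Fin d → Fin K := fun a => Fin.castLE hNK (finProdFinEquiv a)
  have he : Function.Injective e :=
    (Fin.castLE_injective hNK).comp finProdFinEquiv.injective
  let k₀ : Fin K := ⟨d * N, hK⟩
  have hk₀ : ∀ a, e a ≠ k₀ := by
    intro a h
    have h1 : (finProdFinEquiv a : ℕ) = d * N := congrArg Fin.val h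
    have h2 := (finProdFinEquiv a).isLt
    rw [h1, mul_comm] at h2
    exact lt_irrefl _ h2
  refine measure_mono_null (t := ⋃ p : Fin K → Fin N × Fin N, ⋃ L : Fin K → Fin d,
    param e p L '' {Z | ∀ k, slotConfig e L Z (p k).1 (L k)
      - slotConfig e L Z (p k).2 (L k) ≠ 0}) ?_ ?_
  · rintro Y ⟨X, hX, hf⟩
    have hpair : ∀ k, ∃ q : Fin N × Fin N, ∃ l : Fin d, X q.1 l - X q.2 l ≠ 0 ∧
        ∑ l, Y k l * (X q.1 l - X q.2 l) = 0 := by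
      intro k
      obtain ⟨i, -, hi⟩ := Finset.prod_eq_zero_iff.1 (hf k)
      obtain ⟨j, hj, hij⟩ := Finset.prod_eq_zero_iff.1 hi
      have hne : X i ≠ X j := fun h => hX ⟨i, j, (Finset.mem_Ioi.1 hj).ne, h⟩
      obtain ⟨l, hl⟩ := Function.ne_iff.1 hne
      exact ⟨(i, j), l, sub_ne_zero.2 hl, hij⟩
    choose p L hL hY using hpair
    exact Set.mem_iUnion₂.2 ⟨p, L, mem_image_param he hL hY⟩
  · simp only [measure_iUnion_null_iff]
    exact fun p L => volume_image_param e p L k₀ hk₀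
end

section
/- Fix integers N ≥ 2, d ≥ 1, K ≥ 1, let y_1, …, y_K ∈ ℝ^d satisfy the support condition ⋂_{k=1}^{K} {X : f̃_{y_k}(X) = 0} = Ω, and let f_k be the corresponding normalized basis (f_k(X) = f̃_{y_k}(X)/√(∑_i f̃_{y_i}(X)²) off Ω and f_k = 0 on Ω). Then for every anti-symmetric continuous Ψ : (ℝ^d)^N → ℝ, the functions g_k := f_k·Ψ are continuous and symmetric, and ∑_{k=1}^{K} f_k(X)·g_k(X) = Ψ(X) for all X ∈ (ℝ^d)^N. -/
open Classical in
/-- The normalized basis `f_k`. -/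
noncomputable def fBasis (N d K : ℕ) (y : Fin K → Fin d → ℝ) (k : Fin K)
    (X : Fin N → Fin d → ℝ) : ℝ :=
  if X ∈ intrinsicZero N d then 0
  else ftilde N d (y k) X / Real.sqrt (∑ i : Fin K, (ftilde N d (y i) X) ^ 2)

/-- `Ψ` is anti-symmetric. -/
def IsAntisym (N d : ℕ) (Ψ : (Fin N → Fin d → ℝ) → ℝ) : Prop :=
  ∀ (π : Equiv.Perm (Fin N)) (X : Fin N → Fin d → ℝ),
    Ψ (fun i => X (π i)) = ((Equiv.Perm.sign π : ℤ) : ℝ) * Ψ X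

/-- `Ψ` is symmetric. -/
def IsSym (N d : ℕ) (Ψ : (Fin N → Fin d → ℝ) → ℝ) : Prop :=
  ∀ (π : Equiv.Perm (Fin N)) (X : Fin N → Fin d → ℝ),
    Ψ (fun i => X (π i)) = Ψ X

lemma ftilde_eq_det (N d : ℕ) (y : Fin d → ℝ) (X : Fin N → Fin d → ℝ) :
    ftilde N d y X = (Matrix.vandermonde (fun i => -∑ l : Fin d, y l * X i l)).det := by
  rw [Matrix.det_vandermonde, ftilde]
  refine Finset.prod_congr rfl fun i _ => Finset.prod_congr rfl fun j _ => ?_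
  simp only [mul_sub, Finset.sum_sub_distrib]
  ring

lemma ftilde_antisym (N d : ℕ) (y : Fin d → ℝ) : IsAntisym N d (ftilde N d y) := by
  intro π X
  rw [ftilde_eq_det, ftilde_eq_det, ← Matrix.det_permute]
  rfl

lemma continuous_ftilde (N d : ℕ) (y : Fin d → ℝ) : Continuous (ftilde N d y) := by
  unfold ftilde
  fun_prop

lemma IsAntisym.eq_zero_of_mem {N d : ℕ} {Ψ : (Fin N → Fin d → ℝ) → ℝ} (h : IsAntisym N d Ψ)
    {X : Fin N → Fin d → ℝ} (hX : X ∈ intrinsicZero N d) : Ψ X = 0 := by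
  obtain ⟨i, j, hij, hX⟩ := hX
  have hswap : (fun a => X (Equiv.swap i j a)) = X := by
    funext a
    by_cases hai : a = i
    · subst hai; simp [hX]
    · by_cases haj : a = j
      · subst haj; simp [hX]
      · rw [Equiv.swap_apply_of_ne_of_ne hai haj]
  have := h (Equiv.swap i j) X
  rw [hswap, Equiv.Perm.sign_swap hij] at this
  push_cast at this
  linarith

/-- The case distinction in `fBasis` is redundant: on `Ω` the numerator already vanishes. -/
lemma fBasis_eq_div (N d K : ℕ) (y : Fin K → Fin d → ℝ) (k : Fin K) (X : Fin N → Fin d → ℝ) :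
    fBasis N d K y k X
      = ftilde N d (y k) X / Real.sqrt (∑ i : Fin K, (ftilde N d (y i) X) ^ 2) := by
  unfold fBasis
  split_ifs with h
  · rw [(ftilde_antisym N d (y k)).eq_zero_of_mem h, zero_div]
  · rfl

lemma fBasis_antisym (N d K : ℕ) (y : Fin K → Fin d → ℝ) (k : Fin K) :
    IsAntisym N d (fBasis N d K y k) := by
  intro π X
  have hsq : ((Equiv.Perm.sign π : ℤ) : ℝ) ^ 2 = 1 := by
    rcases Int.units_eq_one_or (Equiv.Perm.sign π) with h | h <;> simp [h]
  simp only [fBasis_eq_div, fun i => ftilde_antisym N d (y i) π X, mul_pow, hsq, one_mul,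
    mul_div_assoc]

lemma abs_fBasis_le_one (N d K : ℕ) (y : Fin K → Fin d → ℝ) (k : Fin K)
    (X : Fin N → Fin d → ℝ) : |fBasis N d K y k X| ≤ 1 := by
  rw [fBasis_eq_div, abs_div, abs_of_nonneg (Real.sqrt_nonneg _)]
  refine div_le_one_of_le₀ (Real.abs_le_sqrt ?_) (Real.sqrt_nonneg _)
  exact Finset.single_le_sum (f := fun i => (ftilde N d (y i) X) ^ 2)
    (fun i _ => sq_nonneg _) (Finset.mem_univ k)

theorem stmt_10 (N d K : ℕ) (hN : 2 ≤ N) (hd : 1 ≤ d) (hK : 1 ≤ K)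
    (y : Fin K → Fin d → ℝ)
    (hsupp : (⋂ k : Fin K, {X : Fin N → Fin d → ℝ | ftilde N d (y k) X = 0})
      = intrinsicZero N d)
    (Ψ : (Fin N → Fin d → ℝ) → ℝ) (hΨcont : Continuous Ψ) (hΨanti : IsAntisym N d Ψ) :
    (∀ k : Fin K, Continuous (fun X => fBasis N d K y k X * Ψ X)) ∧
    (∀ k : Fin K, IsSym N d (fun X => fBasis N d K y k X * Ψ X)) ∧
    (∀ X : Fin N → Fin d → ℝ,
      ∑ k : Fin K, fBasis N d K y k X * (fBasis N d K y k X * Ψ X) = Ψ X) := by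
  have hpos : ∀ X, X ∉ intrinsicZero N d → 0 < ∑ i : Fin K, (ftilde N d (y i) X) ^ 2 := by
    intro X hX
    rw [← hsupp] at hX
    simp only [Set.mem_iInter, Set.mem_ofPred_eq, not_forall] at hX
    obtain ⟨k, hk⟩ := hX
    exact Finset.sum_pos' (fun i _ => sq_nonneg _) ⟨k, Finset.mem_univ k, by positivity⟩
  refine ⟨fun k => ?_, fun k π X => ?_, fun X => ?_⟩
  · rw [continuous_iff_continuousAt]
    intro X
    by_cases hX : X ∈ intrinsicZero N d
    · have h0 := hΨanti.eq_zero_of_mem hX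
      have hlim : Filter.Tendsto (fun Z => |Ψ Z|) (nhds X) (nhds 0) := by
        simpa [h0] using hΨcont.abs.tendsto X
      rw [ContinuousAt, h0, mul_zero]
      refine squeeze_zero_norm (fun Z => ?_) hlim
      rw [Real.norm_eq_abs, abs_mul]
      exact mul_le_of_le_one_left (abs_nonneg _) (abs_fBasis_le_one N d K y k Z)
    · simp only [fBasis_eq_div]
      have hc := fun i => continuous_ftilde N d (y i)
      have hs : Continuous fun Z => Real.sqrt (∑ i : Fin K, (ftilde N d (y i) Z) ^ 2) :=
        (continuous_finsetSum _ fun i _ => (hc i).pow 2).sqrt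
      exact ((hc k).continuousAt.div hs.continuousAt
        (Real.sqrt_pos.2 (hpos X hX)).ne').mul hΨcont.continuousAt
  · have hsq : ((Equiv.Perm.sign π : ℤ) : ℝ) * ((Equiv.Perm.sign π : ℤ) : ℝ) = 1 := by
      rcases Int.units_eq_one_or (Equiv.Perm.sign π) with h | h <;> simp [h]
    change fBasis N d K y k (fun i => X (π i)) * Ψ (fun i => X (π i)) = _
    rw [fBasis_antisym N d K y k π X, hΨanti π X, mul_mul_mul_comm, hsq, one_mul]
  · by_cases hX : X ∈ intrinsicZero N d
    · simp [hΨanti.eq_zero_of_mem hX]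
    · have hS := hpos X hX
      simp only [← mul_assoc, ← Finset.sum_mul, fBasis_eq_div, ← pow_two]
      simp only [div_pow, ← Finset.sum_div]
      rw [Real.sq_sqrt hS.le, div_self hS.ne', one_mul]
end
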